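/- Define, for k ∈ (0,1), Y(k) = −√(ι₄(k)/√(1 − k²)) and W(k) = (k⁴K(k) − ι₄(k)(8 − 7k²))/(12√(ι₄(k)³(1 − k²)^{3/2})), where ι₄(k) = (2 − k²)K(k) − 2E(k). Then Y is strictly decreasing on (0,1) and W is strictly increasing on (0,1); moreover Y(k) → 0 and W(k) → 1/√π as k → 0⁺, while Y(k) → −∞ and W(k) → +∞ as k → 1⁻. Consequently the parametric curve {(Y(k), W(k)) : k ∈ (0,1)} is the graph of a function W = W_conj^{22+}(Y) strictly decreasing from +∞ to 1/√π on Y ∈ (−∞, 0). -/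

import Mathlib

open Real Set Filter Topology

/-- Complete elliptic integral of the first kind. -/
noncomputable def K (k : ℝ) : ℝ :=
  ∫ t in (0:ℝ)..(π/2), 1 / Real.sqrt (1 - k^2 * Real.sin t ^ 2)

/-- Complete elliptic integral of the second kind. -/
noncomputable def E (k : ℝ) : ℝ :=
  ∫ t in (0:ℝ)..(π/2), Real.sqrt (1 - k^2 * Real.sin t ^ 2)

noncomputable def ι₄ (k : ℝ) : ℝ := (2 - k^2) * K k - 2 * E k

noncomputable def Y22p (k : ℝ) : ℝ := -Real.sqrt (ι₄ k / Real.sqrt (1 - k^2))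

noncomputable def W22p (k : ℝ) : ℝ :=
  (k^4 * K k - ι₄ k * (8 - 7 * k^2)) /
    (12 * Real.sqrt ((ι₄ k)^3 * (1 - k^2) ^ ((3:ℝ)/2)))

/-!
In the parameter `m = k ^ 2` and with the Jahnke–Emde integrals `B` and `D`, the functions
`ι = m (D - B)` and `δ = m² B - 4 (1 - m) ι` satisfy `ι' = m B / (2 (1 - m))` and `δ' = 9 ι / 2`;
both vanish at `0`, so both are positive and increasing. Now `Y = -√(ι / √(1 - m))`, while
`W² = δ² / (36 ρ³)` with `ρ = ι √(1 - m)`. The derivative of `W²` has the sign of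
`2 δ' ρ - 3 δ ρ'`, which is positive because its quotient by `m` increases from the value `0`.

At `m = 0`, L'Hôpital's rule gives `ι ∼ π m² / 16` and `δ ∼ 3 π m³ / 32`, hence `W² → 1 / π`. At
`m = 1` dominated convergence gives `√(1 - m) K → 0`, hence `ρ → 0` and `W² → ∞`.
-/

section Calculus

open MeasureTheory Function

theorem hasDerivAt_intervalIntegral_of_continuousOn {𝕜 V : Type*} [RCLike 𝕜]
    [NormedAddCommGroup V] [NormedSpace ℝ V] [NormedSpace 𝕜 V] {μ : Measure ℝ}
    [IsLocallyFiniteMeasure μ] {F F' : 𝕜 → ℝ → V} {a b : ℝ} {s : Set 𝕜} {x₀ : 𝕜} (hs : s ∈ 𝓝 x₀)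
    (hF : ∀ x ∈ s, ContinuousOn (F x) (uIcc a b))
    (hF' : ContinuousOn (uncurry F') (s ×ˢ uIcc a b))
    (hderiv : ∀ x ∈ s, ∀ t ∈ uIcc a b, HasDerivAt (fun x => F x t) (F' x t) x) :
    HasDerivAt (fun x => ∫ t in a..b, F x t ∂μ) (∫ t in a..b, F' x₀ t ∂μ) x₀ := by
  obtain ⟨u, hu, hus, hu_compact⟩ := local_compact_nhds hs
  obtain ⟨C, hC⟩ := (hu_compact.prod isCompact_uIcc).exists_bound_of_continuousOn
    (hF'.mono (prod_mono_left hus))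
  have hF'₀ : ContinuousOn (F' x₀) (uIcc a b) :=
    hF'.uncurry_left x₀ (mem_of_mem_nhds hs)
  refine (intervalIntegral.hasDerivAt_integral_of_dominated_loc_of_deriv_le (F' := F')
    (bound := fun _ => C) hu ?_ (hF x₀ (mem_of_mem_nhds hs)).intervalIntegrable ?_ ?_
    intervalIntegrable_const ?_).2
  · filter_upwards [hs] with x hx
    exact ((hF x hx).mono uIoc_subset_uIcc).aestronglyMeasurable measurableSet_uIoc
  · exact (hF'₀.mono uIoc_subset_uIcc).aestronglyMeasurable measurableSet_uIoc
  · exact .of_forall fun t ht x hx => hC (x, t) ⟨hx, uIoc_subset_uIcc ht⟩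
  · exact .of_forall fun t ht x hx => hderiv x (hus hx) t (uIoc_subset_uIcc ht)

theorem strictMonoOn_Ico_of_hasDerivAt_pos {f f' : ℝ → ℝ} {a b : ℝ}
    (hf : ContinuousOn f (Ico a b)) (hderiv : ∀ x ∈ Ioo a b, HasDerivAt f (f' x) x)
    (hpos : ∀ x ∈ Ioo a b, 0 < f' x) : StrictMonoOn f (Ico a b) := by
  refine strictMonoOn_of_hasDerivWithinAt_pos (f' := f') (convex_Ico a b) hf ?_ ?_ <;>
    rw [interior_Ico]
  exacts [fun x hx => (hderiv x hx).hasDerivWithinAt, hpos]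

/-- The hypothesis says that `f x / x` is strictly increasing; its limit at `0` is `c`. -/
theorem mul_lt_of_lt_mul_deriv {f f' : ℝ → ℝ} {b c x : ℝ} (hf₀ : f 0 = 0)
    (hc : HasDerivAt f c 0) (hderiv : ∀ x ∈ Ioo 0 b, HasDerivAt f (f' x) x)
    (hlt : ∀ x ∈ Ioo 0 b, f x < x * f' x) (hx : x ∈ Ioo 0 b) : c * x < f x := by
  have dslope_eq : ∀ y ≠ 0, dslope f 0 y = f y / y := fun y hy => by
    rw [dslope_of_ne f hy, slope_def_field, hf₀, sub_zero, sub_zero]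
  have hderiv_dslope : ∀ y ∈ Ioo 0 b, HasDerivAt (dslope f 0) ((f' y * y - f y) / y ^ 2) y := by
    intro y hy
    refine (((hderiv y hy).div (hasDerivAt_id y) hy.1.ne').congr_deriv
      (by simp)).congr_of_eventuallyEq ?_
    filter_upwards [eventually_ne_nhds hy.1.ne'] with z hz using dslope_eq z hz
  have hmono : StrictMonoOn (dslope f 0) (Ico 0 b) := by
    refine strictMonoOn_Ico_of_hasDerivAt_pos (fun y hy => ?_) hderiv_dslope fun y hy =>
      div_pos (by linarith [hlt y hy]) (pow_pos hy.1 2)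
    rcases hy.1.eq_or_lt with rfl | hy₀
    · exact (continuousAt_dslope_same.2 hc.differentiableAt).continuousWithinAt
    · exact (hderiv_dslope y ⟨hy₀, hy.2⟩).continuousAt.continuousWithinAt
  have h : dslope f 0 0 < dslope f 0 x :=
    hmono (left_mem_Ico.2 (hx.1.trans hx.2)) (Ioo_subset_Ico_self hx) hx.1
  rwa [dslope_same, hc.deriv, dslope_eq x hx.1.ne', lt_div_iff₀ hx.1] at h

theorem tendsto_div_pow_succ_of_hasDerivAt {f f' : ℝ → ℝ} {L : ℝ} (n : ℕ) (hf₀ : f 0 = 0)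
    (hderiv : ∀ᶠ x in 𝓝 0, HasDerivAt f (f' x) x)
    (hlim : Tendsto (fun x => f' x / x ^ n) (𝓝[>] 0) (𝓝 L)) :
    Tendsto (fun x => f x / x ^ (n + 1)) (𝓝[>] 0) (𝓝 (L / (n + 1))) := by
  have tendsto_zero : ∀ {g : ℝ → ℝ}, ContinuousAt g 0 → g 0 = 0 → Tendsto g (𝓝[>] 0) (𝓝 0) :=
    fun {g} hg hg₀ => by simpa [hg₀] using hg.tendsto.mono_left nhdsWithin_le_nhds
  refine HasDerivAt.lhopital_zero_nhdsGT (g' := fun x => (n + 1) * x ^ n)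
    (hderiv.filter_mono nhdsWithin_le_nhds)
    (.of_forall fun x => by simpa using hasDerivAt_pow (n + 1) x) ?_
    (tendsto_zero hderiv.self_of_nhds.continuousAt hf₀)
    (tendsto_zero (by fun_prop) (by simp)) ?_
  · filter_upwards [self_mem_nhdsWithin] with x (hx : 0 < x)
    positivity
  · exact (hlim.div_const (n + 1 : ℝ)).congr fun x => by rw [div_div, mul_comm]

theorem tendsto_div_atTop_of_eventually_le {α 𝕜 : Type*} [Field 𝕜] [LinearOrder 𝕜]
    [IsStrictOrderedRing 𝕜] [TopologicalSpace 𝕜] [OrderTopology 𝕜] {l : Filter α} {f g : α → 𝕜}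
    {c : 𝕜} (hc : 0 < c) (hf : ∀ᶠ x in l, c ≤ f x) (hg : Tendsto g l (𝓝[>] 0)) :
    Tendsto (fun x => f x / g x) l atTop := by
  refine tendsto_atTop_mono' l ?_ (hg.inv_tendsto_nhdsGT_zero.const_mul_atTop hc)
  filter_upwards [hf, hg self_mem_nhdsWithin] with x hfx (hgx : 0 < g x)
  exact (mul_le_mul_of_nonneg_right hfx (inv_pos.2 hgx).le).trans_eq (div_eq_mul_inv _ _).symm

end Calculus

section InverseFunction

variable {α β γ : Type*}

theorem image_prodMk_eq_of_invOn {f : α → β} {g : β → α} {s : Set α} {t : Set β} (w : α → γ)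
    (hf : MapsTo f s t) (hg : MapsTo g t s) (hinv : InvOn g f s t) :
    (fun x => (f x, w x)) '' s = (fun y => (y, w (g y))) '' t := by
  ext p
  constructor
  · rintro ⟨x, hx, rfl⟩
    exact ⟨f x, hf hx, by simp only [hinv.1 hx]⟩
  · rintro ⟨y, hy, rfl⟩
    exact ⟨g y, hg hy, by simp only [hinv.2 hy]⟩

theorem bijOn_Ioo_Iio_of_strictAntiOn [ConditionallyCompleteLinearOrder α] [DenselyOrdered α]
    [TopologicalSpace α] [OrderTopology α] [LinearOrder β] [TopologicalSpace β]
    [OrderClosedTopology β] {f : α → β} {a b : α} {c : β} (hab : a < b)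
    (hf : StrictAntiOn f (Ioo a b)) (hcont : ContinuousOn f (Ioo a b))
    (ha : Tendsto f (𝓝[>] a) (𝓝 c)) (hb : Tendsto f (𝓝[<] b) atBot) :
    BijOn f (Ioo a b) (Iio c) := by
  have := nhdsLT_neBot_of_exists_lt ⟨a, hab⟩
  have := nhdsGT_neBot_of_exists_gt ⟨b, hab⟩
  refine ⟨fun x hx => ?_, hf.injOn, isPreconnected_Ioo.intermediate_value_Iio
    (le_principal_iff.2 (Ioo_mem_nhdsLT hab)) (le_principal_iff.2 (Ioo_mem_nhdsGT hab)) hcont hb ha⟩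
  obtain ⟨y, hay, hyx⟩ := exists_between hx.1
  have hy : y ∈ Ioo a b := ⟨hay, hyx.trans hx.2⟩
  have hfy : f y ≤ c := by
    refine ge_of_tendsto ha ?_
    filter_upwards [Ioo_mem_nhdsGT hay] with z hz
    exact (hf ⟨hz.1, hz.2.trans hy.2⟩ hy hz.2).le
  exact (hf hy hx hyx).trans_le hfy

variable [LinearOrder α] [LinearOrder β] {f : α → β} {g : β → α}

theorem strictAntiOn_of_rightInvOn {s : Set α} {t : Set β} (hf : StrictAntiOn f s)
    (hg : MapsTo g t s) (hinv : RightInvOn g f t) : StrictAntiOn g t := by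
  intro x hx y hy hxy
  rwa [← hf.lt_iff_gt (hg hx) (hg hy), hinv hx, hinv hy]

variable [TopologicalSpace α] [OrderTopology α] [DenselyOrdered α] {a b : α} {c : β}

theorem tendsto_atBot_nhdsLT_of_rightInvOn [NoMinOrder β] (hab : a < b)
    (hf : StrictAntiOn f (Ioo a b)) (hmaps : MapsTo f (Ioo a b) (Iio c))
    (hg : MapsTo g (Iio c) (Ioo a b)) (hinv : RightInvOn g f (Iio c)) :
    Tendsto g atBot (𝓝[<] b) := by
  refine (nhdsLT_basis_of_exists_lt ⟨a, hab⟩).tendsto_right_iff.2 fun l hl => ?_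
  obtain ⟨x, hlx, hxb⟩ := exists_between (max_lt hab hl)
  have hx : x ∈ Ioo a b := ⟨(le_max_left a l).trans_lt hlx, hxb⟩
  filter_upwards [eventually_lt_atBot (f x)] with y hyx
  have hy : y ∈ Iio c := hyx.trans (hmaps hx)
  have hxg : x < g y := by rwa [← hf.lt_iff_gt (hg hy) hx, hinv hy]
  exact ⟨((le_max_right a l).trans_lt hlx).trans hxg, (hg hy).2⟩

theorem tendsto_nhdsLT_nhdsGT_of_rightInvOn [TopologicalSpace β] [OrderTopology β] (hab : a < b)
    (hf : StrictAntiOn f (Ioo a b)) (hmaps : MapsTo f (Ioo a b) (Iio c))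
    (hg : MapsTo g (Iio c) (Ioo a b)) (hinv : RightInvOn g f (Iio c)) :
    Tendsto g (𝓝[<] c) (𝓝[>] a) := by
  refine (nhdsGT_basis_of_exists_gt ⟨b, hab⟩).tendsto_right_iff.2 fun r hr => ?_
  obtain ⟨x, hax, hxr⟩ := exists_between (lt_min hab hr)
  have hx : x ∈ Ioo a b := ⟨hax, hxr.trans_le (min_le_left b r)⟩
  filter_upwards [Ioo_mem_nhdsLT (hmaps hx)] with y hy
  have hgx : g y < x := (hf.lt_iff_gt hx (hg hy.2)).1 (by rw [hinv hy.2]; exact hy.1)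
  exact ⟨(hg hy.2).1, hgx.trans (hxr.trans_le (min_le_right b r))⟩

end InverseFunction

section EllipticIntegrals

variable {m : ℝ}

/-- Legendre's `Δ`, as a function of the parameter `m = k ^ 2` rather than of the modulus `k`, so
that `m = 0` is an interior point of its domain `m < 1`. The complete integrals below follow the
same convention. -/
noncomputable def legendreDelta (m t : ℝ) : ℝ := √(1 - m * sin t ^ 2)

/-- The complete elliptic integral of the first kind, with `ellipticK (k ^ 2) = K k`. -/
noncomputable def ellipticK (m : ℝ) : ℝ := ∫ t in (0 : ℝ)..(π / 2), 1 / legendreDelta m t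

/-- The complete elliptic integral of the second kind, with `ellipticE (k ^ 2) = E k`. -/
noncomputable def ellipticE (m : ℝ) : ℝ := ∫ t in (0 : ℝ)..(π / 2), legendreDelta m t

/-- The complete elliptic integral `B` of Jahnke and Emde. Together with `ellipticD` it replaces
`K` and `E`: no division by `m` occurs when `K`, `E` and their derivatives are written in terms of
the two. -/
noncomputable def ellipticB (m : ℝ) : ℝ :=
  ∫ t in (0 : ℝ)..(π / 2), cos t ^ 2 / legendreDelta m t

/-- The complete elliptic integral `D` of Jahnke and Emde. -/
noncomputable def ellipticD (m : ℝ) : ℝ :=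
  ∫ t in (0 : ℝ)..(π / 2), sin t ^ 2 / legendreDelta m t

theorem one_sub_mul_sin_sq_pos (hm : m < 1) (t : ℝ) : 0 < 1 - m * sin t ^ 2 := by
  rcases le_or_gt m 0 with hm₀ | hm₀ <;> nlinarith [sin_sq_le_one t, sq_nonneg (sin t)]

theorem legendreDelta_pos (hm : m < 1) (t : ℝ) : 0 < legendreDelta m t :=
  sqrt_pos.2 (one_sub_mul_sin_sq_pos hm t)

theorem legendreDelta_sq (hm : m < 1) (t : ℝ) : legendreDelta m t ^ 2 = 1 - m * sin t ^ 2 :=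
  sq_sqrt (one_sub_mul_sin_sq_pos hm t).le

theorem continuous_uncurry_legendreDelta : Continuous (Function.uncurry legendreDelta) := by
  unfold legendreDelta
  fun_prop

theorem continuous_legendreDelta (m : ℝ) : Continuous (legendreDelta m) :=
  continuous_uncurry_legendreDelta.uncurry_left m

theorem intervalIntegrable_div_legendreDelta_pow (hm : m < 1) {f : ℝ → ℝ} (hf : Continuous f)
    (n : ℕ) (a b : ℝ) :
    IntervalIntegrable (fun t => f t / legendreDelta m t ^ n) MeasureTheory.volume a b :=
  (hf.div ((continuous_legendreDelta m).pow n)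
    fun t => pow_ne_zero n (legendreDelta_pos hm t).ne').intervalIntegrable a b

theorem intervalIntegrable_div_legendreDelta (hm : m < 1) {f : ℝ → ℝ} (hf : Continuous f)
    (a b : ℝ) : IntervalIntegrable (fun t => f t / legendreDelta m t) MeasureTheory.volume a b := by
  simpa only [pow_one] using intervalIntegrable_div_legendreDelta_pow hm hf 1 a b

theorem hasDerivAt_legendreDelta_param (hm : m < 1) (t : ℝ) :
    HasDerivAt (fun x => legendreDelta x t) (-(sin t ^ 2 / (2 * legendreDelta m t))) m := by
  have h : HasDerivAt (fun x => 1 - x * sin t ^ 2) (-sin t ^ 2) m := by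
    simpa using ((hasDerivAt_id m).mul_const (sin t ^ 2)).const_sub 1
  exact (h.sqrt (one_sub_mul_sin_sq_pos hm t).ne').congr_deriv (neg_div _ _)

theorem hasDerivAt_inv_legendreDelta_param (hm : m < 1) (t : ℝ) :
    HasDerivAt (fun x => 1 / legendreDelta x t) (sin t ^ 2 / (2 * legendreDelta m t ^ 3)) m := by
  have hΔ := (legendreDelta_pos hm t).ne'
  simp only [one_div]
  refine ((hasDerivAt_legendreDelta_param hm t).inv hΔ).congr_deriv ?_
  field_simp

theorem hasDerivAt_sin_mul_cos_div_legendreDelta (hm : m < 1) (t : ℝ) :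
    HasDerivAt (fun t => sin t * cos t / legendreDelta m t)
      (cos t ^ 2 / legendreDelta m t - (1 - m) * (sin t ^ 2 / legendreDelta m t ^ 3)) t := by
  have hΔ := (legendreDelta_pos hm t).ne'
  have hΔ' : HasDerivAt (legendreDelta m) (-(m * (2 * sin t * cos t)) / (2 * legendreDelta m t))
      t := by
    refine HasDerivAt.sqrt ?_ (one_sub_mul_sin_sq_pos hm t).ne'
    exact ((((hasDerivAt_sin t).pow 2).const_mul m).const_sub 1).congr_deriv (by simp)
  refine (((hasDerivAt_sin t).mul (hasDerivAt_cos t)).div hΔ' hΔ).congr_deriv ?_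
  have hsq := legendreDelta_sq hm t
  have hcos := sin_sq_add_cos_sq t
  simp only [Pi.mul_apply]
  field_simp
  linear_combination (-sin t ^ 2) * hsq + m * sin t ^ 2 * hcos

theorem one_sub_mul_integral_sin_sq_div_legendreDelta_pow_three (hm : m < 1) :
    (1 - m) * ∫ t in (0 : ℝ)..(π / 2), sin t ^ 2 / legendreDelta m t ^ 3 = ellipticB m := by
  have hcos := intervalIntegrable_div_legendreDelta hm
    (f := fun t => cos t ^ 2) (by fun_prop) 0 (π / 2)
  have hsin := (intervalIntegrable_div_legendreDelta_pow hm
    (f := fun t => sin t ^ 2) (by fun_prop) 3 0 (π / 2)).const_mul (1 - m)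
  have h := intervalIntegral.integral_eq_sub_of_hasDerivAt
    (fun t _ => hasDerivAt_sin_mul_cos_div_legendreDelta hm t) (hcos.sub hsin)
  rw [intervalIntegral.integral_sub hcos hsin, intervalIntegral.integral_const_mul] at h
  simp only [cos_pi_div_two, sin_zero, mul_zero, zero_mul, zero_div, sub_self] at h
  exact (sub_eq_zero.1 h).symm

theorem hasDerivAt_ellipticK (hm : m < 1) :
    HasDerivAt ellipticK (ellipticB m / (2 * (1 - m))) m := by
  have hcont : ContinuousOn
      (Function.uncurry fun x t => sin t ^ 2 / (2 * legendreDelta x t ^ 3))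
      (Iio 1 ×ˢ uIcc 0 (π / 2)) := by
    refine ContinuousOn.div (by fun_prop)
      ((continuous_uncurry_legendreDelta.pow 3).const_mul 2).continuousOn fun p hp => ?_
    have := legendreDelta_pos hp.1 p.2
    positivity
  refine (hasDerivAt_intervalIntegral_of_continuousOn (Iio_mem_nhds hm) (fun x hx => ?_) hcont
    fun x hx t _ => hasDerivAt_inv_legendreDelta_param hx t).congr_deriv ?_
  · exact (continuous_const.div (continuous_legendreDelta x)
      fun t => (legendreDelta_pos hx t).ne').continuousOn
  · have h1m : 1 - m ≠ 0 := (sub_pos.2 hm).ne'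
    rw [← one_sub_mul_integral_sin_sq_div_legendreDelta_pow_three hm, mul_comm (1 - m),
      mul_div_mul_right _ _ h1m, ← intervalIntegral.integral_div]
    simp only [div_div, mul_comm]

theorem hasDerivAt_ellipticE (hm : m < 1) : HasDerivAt ellipticE (-(ellipticD m / 2)) m := by
  have hcont : ContinuousOn
      (Function.uncurry fun x t => -(sin t ^ 2 / (2 * legendreDelta x t)))
      (Iio 1 ×ˢ uIcc 0 (π / 2)) := by
    refine (ContinuousOn.div (by fun_prop)
      (continuous_uncurry_legendreDelta.const_mul 2).continuousOn fun p hp => ?_).neg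
    have := legendreDelta_pos hp.1 p.2
    positivity
  refine (hasDerivAt_intervalIntegral_of_continuousOn (Iio_mem_nhds hm)
    (fun x _ => (continuous_legendreDelta x).continuousOn) hcont
    fun x hx t _ => hasDerivAt_legendreDelta_param hx t).congr_deriv ?_
  rw [intervalIntegral.integral_neg, ellipticD, ← intervalIntegral.integral_div]
  simp only [div_div, mul_comm]

theorem ellipticK_eq_add (hm : m < 1) : ellipticK m = ellipticB m + ellipticD m := by
  rw [ellipticB, ellipticD, ← intervalIntegral.integral_add
    (intervalIntegrable_div_legendreDelta hm (f := fun t => cos t ^ 2) (by fun_prop) _ _)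
    (intervalIntegrable_div_legendreDelta hm (f := fun t => sin t ^ 2) (by fun_prop) _ _)]
  simp only [← add_div, cos_sq_add_sin_sq, ellipticK]

theorem ellipticE_eq_add (hm : m < 1) :
    ellipticE m = ellipticB m + (1 - m) * ellipticD m := by
  have hcos := intervalIntegrable_div_legendreDelta hm
    (f := fun t => cos t ^ 2) (by fun_prop) 0 (π / 2)
  have hsin := intervalIntegrable_div_legendreDelta hm
    (f := fun t => sin t ^ 2) (by fun_prop) 0 (π / 2)
  rw [ellipticB, ellipticD, ← intervalIntegral.integral_const_mul,
    ← intervalIntegral.integral_add hcos (hsin.const_mul _), ellipticE]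
  congr 1 with t
  have hΔ := (legendreDelta_pos hm t).ne'
  field_simp
  rw [legendreDelta_sq hm, cos_sq']
  ring

theorem ellipticK_zero : ellipticK 0 = π / 2 := by simp [ellipticK, legendreDelta]

theorem ellipticK_pos (hm : m < 1) : 0 < ellipticK m :=
  intervalIntegral.intervalIntegral_pos_of_pos
    (intervalIntegrable_div_legendreDelta hm continuous_const _ _)
    (fun t => one_div_pos.2 (legendreDelta_pos hm t)) (by positivity)

theorem ellipticB_pos (hm : m < 1) : 0 < ellipticB m := by
  refine intervalIntegral.intervalIntegral_pos_of_pos_on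
    (intervalIntegrable_div_legendreDelta hm (f := fun t => cos t ^ 2) (by fun_prop) _ _)
    (fun t ht => ?_) (by positivity)
  exact div_pos (pow_pos (cos_pos_of_mem_Ioo ⟨by linarith [ht.1, pi_pos], ht.2⟩) 2)
    (legendreDelta_pos hm t)

theorem hasDerivAt_mul_ellipticB (hm : m < 1) :
    HasDerivAt (fun x => x * ellipticB x) (ellipticK m / 2) m := by
  have hsub : HasDerivAt (fun x => ellipticE x - (1 - x) * ellipticK x) (ellipticK m / 2) m := by
    refine ((hasDerivAt_ellipticE hm).sub
      (((hasDerivAt_id m).const_sub 1).mul (hasDerivAt_ellipticK hm))).congr_deriv ?_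
    have h1m : 1 - m ≠ 0 := (sub_pos.2 hm).ne'
    simp only [id_eq, ellipticK_eq_add hm]
    field_simp
    ring
  refine hsub.congr_of_eventuallyEq ?_
  filter_upwards [Iio_mem_nhds hm] with x (hx : x < 1)
  rw [ellipticE_eq_add hx, ellipticK_eq_add hx]
  ring

theorem sqrt_one_sub_le_legendreDelta (hm : 0 ≤ m) (t : ℝ) : √(1 - m) ≤ legendreDelta m t :=
  sqrt_le_sqrt (sub_le_sub_left (mul_le_of_le_one_right hm (sin_sq_le_one t)) 1)

theorem tendsto_sqrt_one_sub_mul_inv_legendreDelta {t : ℝ} (ht : cos t ≠ 0) :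
    Tendsto (fun m => √(1 - m) * (1 / legendreDelta m t)) (𝓝[<] 1) (𝓝 0) := by
  have hΔ : legendreDelta 1 t ≠ 0 := by
    rw [legendreDelta, one_mul, ← cos_sq']
    exact (sqrt_pos.2 (by positivity)).ne'
  have hcont : ContinuousAt (fun m => √(1 - m) * (1 / legendreDelta m t)) 1 :=
    ContinuousAt.mul (by fun_prop)
      (continuousAt_const.div (continuous_uncurry_legendreDelta.uncurry_right t).continuousAt hΔ)
  simpa using hcont.tendsto.mono_left nhdsWithin_le_nhds

theorem tendsto_sqrt_one_sub_mul_ellipticK :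
    Tendsto (fun m => √(1 - m) * ellipticK m) (𝓝[<] 1) (𝓝 0) := by
  have hlim : Tendsto (fun m => ∫ t in (0 : ℝ)..(π / 2), √(1 - m) * (1 / legendreDelta m t))
      (𝓝[<] 1) (𝓝 (∫ _ in (0 : ℝ)..(π / 2), 0)) := by
    refine intervalIntegral.tendsto_integral_filter_of_dominated_convergence (fun _ => 1) ?_ ?_
      intervalIntegrable_const ?_
    · refine .of_forall fun m => Measurable.aestronglyMeasurable ?_
      have := (continuous_legendreDelta m).measurable
      fun_prop
    · filter_upwards [Ioo_mem_nhdsLT zero_lt_one] with m hm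
      refine .of_forall fun t _ => ?_
      have hΔ := legendreDelta_pos hm.2 t
      rw [norm_of_nonneg (by positivity), mul_one_div, div_le_one hΔ]
      exact sqrt_one_sub_le_legendreDelta hm.1.le t
    · filter_upwards [MeasureTheory.Measure.ae_ne MeasureTheory.volume (π / 2)] with t htne ht
      rw [uIoc_of_le (by positivity)] at ht
      exact tendsto_sqrt_one_sub_mul_inv_legendreDelta
        (cos_pos_of_mem_Ioo ⟨by linarith [ht.1, pi_pos], ht.2.lt_of_ne htne⟩).ne'
  simpa only [intervalIntegral.integral_const_mul, intervalIntegral.integral_zero] using! hlim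

end EllipticIntegrals

section Profile

variable {m : ℝ}

/-- `ι₄` as a function of the parameter: `ι₄ k = iota (k ^ 2)`. -/
noncomputable def iota (m : ℝ) : ℝ := (2 - m) * ellipticK m - 2 * ellipticE m

/-- Half of the numerator of `W22p`, as a function of the parameter. -/
noncomputable def wNumer (m : ℝ) : ℝ := m * (m * ellipticB m) - 4 * (1 - m) * iota m

/-- The quantity whose cube stands under the square root in the denominator of `W22p`. -/
noncomputable def wBase (m : ℝ) : ℝ := iota m * √(1 - m)

/-- The square of `W22p`, as a function of the parameter. -/
noncomputable def wSq (m : ℝ) : ℝ := wNumer m ^ 2 / (36 * wBase m ^ 3)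

/-- The factor that decides the sign of the derivative of `wSq = wNumer ^ 2 / (36 * wBase ^ 3)`,
normalized to be `2 / 3 * (2 * wNumer' * wBase - 3 * wNumer * wBase')`. -/
noncomputable def wSlope (m : ℝ) : ℝ :=
  (6 * (1 - m) * iota m ^ 2 - (m * ellipticB m - iota m) * wNumer m) / √(1 - m)

theorem mul_ellipticK_eq_iota_add (hm : m < 1) :
    m * ellipticK m = iota m + 2 * (m * ellipticB m) := by
  rw [iota, ellipticE_eq_add hm, ellipticK_eq_add hm]
  ring

theorem iota_zero : iota 0 = 0 := by
  simpa using (mul_ellipticK_eq_iota_add zero_lt_one).symm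

theorem wNumer_zero : wNumer 0 = 0 := by simp [wNumer, iota_zero]

theorem wSlope_zero : wSlope 0 = 0 := by simp [wSlope, iota_zero]

theorem hasDerivAt_iota (hm : m < 1) :
    HasDerivAt iota (m * ellipticB m / (2 * (1 - m))) m := by
  refine ((((hasDerivAt_id m).const_sub 2).mul (hasDerivAt_ellipticK hm)).sub
    ((hasDerivAt_ellipticE hm).const_mul 2)).congr_deriv ?_
  have h1m : 1 - m ≠ 0 := (sub_pos.2 hm).ne'
  simp only [id_eq, ellipticK_eq_add hm]
  field_simp
  ring

theorem hasDerivAt_wNumer (hm : m < 1) : HasDerivAt wNumer (9 / 2 * iota m) m := by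
  refine (((hasDerivAt_id m).mul (hasDerivAt_mul_ellipticB hm)).sub
    ((((hasDerivAt_id m).const_sub 1).const_mul 4).mul (hasDerivAt_iota hm))).congr_deriv ?_
  have h1m : 1 - m ≠ 0 := (sub_pos.2 hm).ne'
  simp only [id_eq]
  field_simp
  linear_combination mul_ellipticK_eq_iota_add hm

theorem hasDerivAt_sqrt_one_sub (hm : m < 1) :
    HasDerivAt (fun x => √(1 - x)) (-1 / (2 * √(1 - m))) m :=
  ((hasDerivAt_id m).const_sub 1).sqrt (sub_pos.2 hm).ne'

theorem hasDerivAt_wBase (hm : m < 1) :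
    HasDerivAt wBase ((m * ellipticB m - iota m) / (2 * √(1 - m))) m := by
  have h1m : 0 < 1 - m := sub_pos.2 hm
  have hsqrt : √(1 - m) ≠ 0 := (sqrt_pos.2 h1m).ne'
  refine ((hasDerivAt_iota hm).mul (hasDerivAt_sqrt_one_sub hm)).congr_deriv ?_
  field_simp
  rw [sq_sqrt h1m.le]
  ring

theorem hasDerivAt_wSq (hm : m < 1) (hiota : iota m ≠ 0) :
    HasDerivAt wSq (wNumer m * wSlope m / (24 * wBase m ^ 4)) m := by
  have h1m : 0 < 1 - m := sub_pos.2 hm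
  have hsqrt : √(1 - m) ≠ 0 := (sqrt_pos.2 h1m).ne'
  have hbase : wBase m ≠ 0 := mul_ne_zero hiota hsqrt
  have hslope : wSlope m = 2 / 3 * (2 * (9 / 2 * iota m) * wBase m -
      3 * wNumer m * ((m * ellipticB m - iota m) / (2 * √(1 - m)))) := by
    rw [wSlope, wBase]
    field_simp
    rw [sq_sqrt h1m.le]
    ring
  refine (((hasDerivAt_wNumer hm).pow 2).div (((hasDerivAt_wBase hm).pow 3).const_mul 36)
    (mul_ne_zero (by norm_num) (pow_ne_zero 3 hbase))).congr_deriv ?_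
  simp only [hslope, Pi.pow_apply]
  field_simp
  ring

theorem hasDerivAt_wSlope (hm : m < 1) :
    HasDerivAt wSlope ((3 * (1 - m) * iota m * (iota m + m * ellipticB m) +
      (iota m - (1 - m) * ellipticK m) * wNumer m) / (2 * (1 - m) * √(1 - m))) m := by
  have h1m : 0 < 1 - m := sub_pos.2 hm
  have hsqrt : √(1 - m) ≠ 0 := (sqrt_pos.2 h1m).ne'
  refine ((((((hasDerivAt_id m).const_sub 1).const_mul 6).mul ((hasDerivAt_iota hm).pow 2)).sub
    (((hasDerivAt_mul_ellipticB hm).sub (hasDerivAt_iota hm)).mul (hasDerivAt_wNumer hm))).div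
    (hasDerivAt_sqrt_one_sub hm) hsqrt).congr_deriv ?_
  simp only [id_eq, Pi.sub_apply, Pi.mul_apply, Pi.pow_apply]
  field_simp
  rw [sq_sqrt h1m.le]
  ring

theorem strictMonoOn_iota : StrictMonoOn iota (Ico 0 1) :=
  strictMonoOn_Ico_of_hasDerivAt_pos
    (fun _ hx => (hasDerivAt_iota hx.2).continuousAt.continuousWithinAt)
    (fun _ hx => hasDerivAt_iota hx.2)
    fun _ hx => div_pos (mul_pos hx.1 (ellipticB_pos hx.2)) (by linarith [hx.2])

theorem iota_pos (hm : m ∈ Ioo 0 1) : 0 < iota m := by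
  simpa [iota_zero] using
    strictMonoOn_iota (left_mem_Ico.2 one_pos) (Ioo_subset_Ico_self hm) hm.1

theorem iota_le_ellipticK (hm : m ∈ Ioo 0 1) : iota m ≤ ellipticK m := by
  have h := mul_ellipticK_eq_iota_add hm.2
  have hB := mul_pos hm.1 (ellipticB_pos hm.2)
  have hK := mul_le_of_le_one_left (ellipticK_pos hm.2).le hm.2.le
  linarith

theorem strictMonoOn_wNumer : StrictMonoOn wNumer (Ico 0 1) :=
  strictMonoOn_Ico_of_hasDerivAt_pos
    (fun _ hx => (hasDerivAt_wNumer hx.2).continuousAt.continuousWithinAt)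
    (fun _ hx => hasDerivAt_wNumer hx.2) fun _ hx => mul_pos (by norm_num) (iota_pos hx)

theorem wNumer_pos (hm : m ∈ Ioo 0 1) : 0 < wNumer m := by
  simpa [wNumer_zero] using
    strictMonoOn_wNumer (left_mem_Ico.2 one_pos) (Ioo_subset_Ico_self hm) hm.1

theorem wBase_pos (hm : m ∈ Ioo 0 1) : 0 < wBase m :=
  mul_pos (iota_pos hm) (sqrt_pos.2 (sub_pos.2 hm.2))

theorem wSlope_lt_mul_deriv (hm : m ∈ Ioo 0 1) :
    wSlope m < m * ((3 * (1 - m) * iota m * (iota m + m * ellipticB m) +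
      (iota m - (1 - m) * ellipticK m) * wNumer m) / (2 * (1 - m) * √(1 - m))) := by
  have h1m : 0 < 1 - m := sub_pos.2 hm.2
  have hm₀ : 0 < m := hm.1
  have hiota : 0 < iota m := iota_pos hm
  have hnumer : 0 < wNumer m := wNumer_pos hm
  rw [← sub_pos]
  calc 0 < m * (iota m * wNumer m + 3 * (1 - m) * iota m ^ 2) / (2 * (1 - m) * √(1 - m)) := by
        positivity
    _ = _ := by
        rw [wSlope]
        field_simp
        rw [wNumer]
        linear_combination (1 - m) * (m * (m * ellipticB m) - 4 * (1 - m) * iota m) *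
          mul_ellipticK_eq_iota_add hm.2

theorem wSlope_pos (hm : m ∈ Ioo 0 1) : 0 < wSlope m := by
  have hderiv₀ : HasDerivAt wSlope 0 0 := by
    simpa [iota_zero, wNumer_zero] using hasDerivAt_wSlope zero_lt_one
  simpa using mul_lt_of_lt_mul_deriv wSlope_zero hderiv₀ (fun _ hx => hasDerivAt_wSlope hx.2)
    (fun _ hx => wSlope_lt_mul_deriv hx) hm

theorem strictMonoOn_wSq : StrictMonoOn wSq (Ioo 0 1) := by
  have hderiv : ∀ x ∈ Ioo 0 1, HasDerivAt wSq (wNumer x * wSlope x / (24 * wBase x ^ 4)) x :=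
    fun x hx => hasDerivAt_wSq hx.2 (iota_pos hx).ne'
  refine strictMonoOn_of_hasDerivWithinAt_pos (convex_Ioo 0 1)
    (f' := fun x => wNumer x * wSlope x / (24 * wBase x ^ 4))
    (fun x hx => (hderiv x hx).continuousAt.continuousWithinAt) (fun x hx => ?_) fun x hx => ?_
  all_goals rw [interior_Ioo] at hx
  · exact (hderiv x hx).hasDerivWithinAt
  · exact div_pos (mul_pos (wNumer_pos hx) (wSlope_pos hx))
      (mul_pos (by norm_num) (pow_pos (wBase_pos hx) 4))

theorem strictMonoOn_iota_div_sqrt_one_sub :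
    StrictMonoOn (fun m => iota m / √(1 - m)) (Ioo 0 1) := fun x hx y hy hxy =>
  div_lt_div₀ (strictMonoOn_iota (Ioo_subset_Ico_self hx) (Ioo_subset_Ico_self hy) hxy)
    (sqrt_le_sqrt (by linarith)) (iota_pos hy).le (sqrt_pos.2 (sub_pos.2 hy.2))

theorem tendsto_ellipticB_nhdsGT_zero : Tendsto ellipticB (𝓝[>] 0) (𝓝 (π / 4)) := by
  have h := (hasDerivAt_mul_ellipticB zero_lt_one).tendsto_slope_zero_right
  rw [ellipticK_zero, div_div, show (2 : ℝ) * 2 = 4 by norm_num] at h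
  simp only [zero_add, zero_mul, sub_zero, smul_eq_mul] at h
  refine h.congr' ?_
  filter_upwards [self_mem_nhdsWithin] with m (hm : 0 < m) using inv_mul_cancel_left₀ hm.ne' _

theorem tendsto_iota_div_sq_nhdsGT_zero :
    Tendsto (fun m => iota m / m ^ 2) (𝓝[>] 0) (𝓝 (π / 16)) := by
  have hderiv : Tendsto (fun m => m * ellipticB m / (2 * (1 - m)) / m ^ 1) (𝓝[>] 0)
      (𝓝 (π / 4 / (2 * (1 - 0)))) := by
    have hcont : ContinuousAt (fun m : ℝ => 2 * (1 - m)) 0 := by fun_prop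
    refine (tendsto_ellipticB_nhdsGT_zero.div
      (hcont.tendsto.mono_left nhdsWithin_le_nhds) (by norm_num)).congr' ?_
    filter_upwards [self_mem_nhdsWithin] with m (hm : 0 < m)
    rw [pow_one, div_right_comm, mul_div_cancel_left₀ _ hm.ne', Pi.div_apply]
  convert tendsto_div_pow_succ_of_hasDerivAt 1 iota_zero
    ((eventually_lt_nhds zero_lt_one).mono fun x hx => hasDerivAt_iota hx) hderiv using 2
  push_cast
  ring

theorem tendsto_wNumer_div_pow_three_nhdsGT_zero :
    Tendsto (fun m => wNumer m / m ^ 3) (𝓝[>] 0) (𝓝 (3 * π / 32)) := by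
  have hderiv : Tendsto (fun m => 9 / 2 * iota m / m ^ 2) (𝓝[>] 0) (𝓝 (9 / 2 * (π / 16))) := by
    simpa only [mul_div_assoc] using tendsto_iota_div_sq_nhdsGT_zero.const_mul (9 / 2)
  convert tendsto_div_pow_succ_of_hasDerivAt 2 wNumer_zero
    ((eventually_lt_nhds zero_lt_one).mono fun x hx => hasDerivAt_wNumer hx) hderiv using 2
  push_cast
  ring

theorem tendsto_wSq_nhdsGT_zero : Tendsto wSq (𝓝[>] 0) (𝓝 (1 / π)) := by
  have hsqrt : ContinuousAt (fun m => √(1 - m)) 0 := by fun_prop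
  have hbase : Tendsto (fun m => wBase m / m ^ 2) (𝓝[>] 0) (𝓝 (π / 16)) := by
    simpa [wBase, div_mul_eq_mul_div] using
      tendsto_iota_div_sq_nhdsGT_zero.mul (hsqrt.tendsto.mono_left nhdsWithin_le_nhds)
  have hlim : Tendsto (fun m => (wNumer m / m ^ 3) ^ 2 / (36 * (wBase m / m ^ 2) ^ 3)) (𝓝[>] 0)
      (𝓝 ((3 * π / 32) ^ 2 / (36 * (π / 16) ^ 3))) :=
    (tendsto_wNumer_div_pow_three_nhdsGT_zero.pow 2).div ((hbase.pow 3).const_mul 36)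
      (by positivity)
  have hval : (3 * π / 32) ^ 2 / (36 * (π / 16) ^ 3) = 1 / π := by
    field_simp
    norm_num
  rw [hval] at hlim
  refine hlim.congr' ?_
  filter_upwards [self_mem_nhdsWithin] with m (hm : 0 < m)
  rw [wSq]
  field_simp

theorem tendsto_sqrt_one_sub_nhdsLT_one : Tendsto (fun m => √(1 - m)) (𝓝[<] 1) (𝓝[>] 0) := by
  have hcont : ContinuousWithinAt (fun m => √(1 - m)) (Iio 1) 1 := by fun_prop
  simpa using hcont.tendsto_nhdsWithin (t := Ioi 0) fun m hm => sqrt_pos.2 (sub_pos.2 hm)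

theorem tendsto_wBase_nhdsLT_one : Tendsto wBase (𝓝[<] 1) (𝓝[>] 0) := by
  have hpos : ∀ᶠ m in 𝓝[<] 1, 0 < wBase m := by
    filter_upwards [Ioo_mem_nhdsLT zero_lt_one] with m hm using wBase_pos hm
  refine tendsto_nhdsWithin_iff.2 ⟨?_, hpos⟩
  refine squeeze_zero' (hpos.mono fun m => le_of_lt) ?_ tendsto_sqrt_one_sub_mul_ellipticK
  filter_upwards [Ioo_mem_nhdsLT zero_lt_one] with m hm
  rw [wBase, mul_comm]
  exact mul_le_mul_of_nonneg_left (iota_le_ellipticK hm) (sqrt_nonneg _)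

theorem tendsto_iota_div_sqrt_one_sub_nhdsLT_one :
    Tendsto (fun m => iota m / √(1 - m)) (𝓝[<] 1) atTop := by
  have hhalf : (1 / 2 : ℝ) ∈ Ioo 0 1 := by norm_num
  refine tendsto_div_atTop_of_eventually_le (iota_pos hhalf) ?_ tendsto_sqrt_one_sub_nhdsLT_one
  filter_upwards [Ioo_mem_nhdsLT hhalf.2] with m hm
  exact strictMonoOn_iota.monotoneOn (Ioo_subset_Ico_self hhalf)
    ⟨hhalf.1.le.trans hm.1.le, hm.2⟩ hm.1.le

theorem tendsto_wSq_nhdsLT_one : Tendsto wSq (𝓝[<] 1) atTop := by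
  have hhalf : (1 / 2 : ℝ) ∈ Ioo 0 1 := by norm_num
  have hbase : Tendsto (fun m => 36 * wBase m ^ 3) (𝓝[<] 1) (𝓝[>] 0) := by
    have hcont : ContinuousWithinAt (fun x : ℝ => 36 * x ^ 3) (Ioi 0) 0 := by fun_prop
    have h := hcont.tendsto_nhdsWithin (t := Ioi 0) fun x (hx : 0 < x) =>
      mem_Ioi.2 (by positivity)
    simpa using! h.comp tendsto_wBase_nhdsLT_one
  refine tendsto_div_atTop_of_eventually_le (pow_pos (wNumer_pos hhalf) 2) ?_ hbase
  filter_upwards [Ioo_mem_nhdsLT hhalf.2] with m hm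
  exact pow_le_pow_left₀ (wNumer_pos hhalf).le (strictMonoOn_wNumer.monotoneOn
    (Ioo_subset_Ico_self hhalf) ⟨hhalf.1.le.trans hm.1.le, hm.2⟩ hm.1.le) 2

end Profile

section ModulusSubstitution

theorem mapsTo_sq_Ioo_zero_one : MapsTo (fun k : ℝ => k ^ 2) (Ioo 0 1) (Ioo 0 1) :=
  fun _ hk => ⟨pow_pos hk.1 2, pow_lt_one₀ hk.1.le hk.2 two_ne_zero⟩

theorem strictMonoOn_sq_Ioo_zero_one : StrictMonoOn (fun k : ℝ => k ^ 2) (Ioo 0 1) :=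
  fun _ hx _ _ hxy => pow_lt_pow_left₀ hxy hx.1.le two_ne_zero

theorem tendsto_sq_nhdsGT_zero : Tendsto (fun k : ℝ => k ^ 2) (𝓝[>] 0) (𝓝[>] 0) := by
  have hcont : ContinuousWithinAt (fun k : ℝ => k ^ 2) (Ioi 0) 0 := by fun_prop
  simpa using hcont.tendsto_nhdsWithin (t := Ioi 0) fun k hk => pow_pos (mem_Ioi.1 hk) 2

theorem tendsto_sq_nhdsLT_one : Tendsto (fun k : ℝ => k ^ 2) (𝓝[<] 1) (𝓝[<] 1) := by
  have hcont : ContinuousWithinAt (fun k : ℝ => k ^ 2) (Ioo 0 1) 1 := by fun_prop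
  simpa [nhdsWithin_Ioo_eq_nhdsLT] using
    hcont.tendsto_nhdsWithin (t := Iio 1) fun k hk => (mapsTo_sq_Ioo_zero_one hk).2

theorem Y22p_eq_neg_sqrt (k : ℝ) : Y22p k = -√(iota (k ^ 2) / √(1 - k ^ 2)) := rfl

theorem W22p_eq_sqrt_wSq {k : ℝ} (hk : k ∈ Ioo 0 1) : W22p k = √(wSq (k ^ 2)) := by
  have hm := mapsTo_sq_Ioo_zero_one hk
  have hnumer : k ^ 4 * K k - ι₄ k * (8 - 7 * k ^ 2) = 2 * wNumer (k ^ 2) := by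
    have h : k ^ 2 * K k = ι₄ k + 2 * (k ^ 2 * ellipticB (k ^ 2)) :=
      mul_ellipticK_eq_iota_add hm.2
    rw [wNumer, ← show ι₄ k = iota (k ^ 2) from rfl]
    linear_combination k ^ 2 * h
  have hbase : ι₄ k ^ 3 * (1 - k ^ 2) ^ ((3 : ℝ) / 2) = wBase (k ^ 2) ^ 3 := by
    rw [wBase, mul_pow, rpow_div_two_eq_sqrt _ (sub_pos.2 hm.2).le]
    norm_cast
  rw [W22p, hnumer, hbase, wSq, sqrt_div (sq_nonneg _), sqrt_sq (wNumer_pos hm).le,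
    sqrt_mul (by norm_num), show (36 : ℝ) = 6 ^ 2 by norm_num, sqrt_sq (by norm_num)]
  ring

theorem strictAntiOn_Y22p : StrictAntiOn Y22p (Ioo 0 1) := fun x hx y hy hxy => by
  have hx_sq := mapsTo_sq_Ioo_zero_one hx
  exact neg_lt_neg (sqrt_lt_sqrt (div_nonneg (iota_pos hx_sq).le (sqrt_nonneg _))
    (strictMonoOn_iota_div_sqrt_one_sub hx_sq (mapsTo_sq_Ioo_zero_one hy)
      (strictMonoOn_sq_Ioo_zero_one hx hy hxy)))

theorem strictMonoOn_W22p : StrictMonoOn W22p (Ioo 0 1) := fun x hx y hy hxy => by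
  rw [W22p_eq_sqrt_wSq hx, W22p_eq_sqrt_wSq hy]
  exact sqrt_lt_sqrt
    (div_nonneg (sq_nonneg _)
      (mul_nonneg (by norm_num) (pow_pos (wBase_pos (mapsTo_sq_Ioo_zero_one hx)) 3).le))
    (strictMonoOn_wSq (mapsTo_sq_Ioo_zero_one hx) (mapsTo_sq_Ioo_zero_one hy)
      (strictMonoOn_sq_Ioo_zero_one hx hy hxy))

theorem continuousAt_Y22p {k : ℝ} (hk : k ^ 2 < 1) : ContinuousAt Y22p k := by
  have hiota : ContinuousAt (fun k => iota (k ^ 2)) k :=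
    (hasDerivAt_iota hk).continuousAt.comp (f := fun k => k ^ 2) (by fun_prop)
  exact (hiota.div (by fun_prop) (sqrt_pos.2 (sub_pos.2 hk)).ne').sqrt.neg

theorem tendsto_Y22p_nhdsGT_zero : Tendsto Y22p (𝓝[>] 0) (𝓝 0) := by
  have h := (continuousAt_Y22p (k := 0) (by norm_num)).tendsto
  rw [Y22p_eq_neg_sqrt, zero_pow two_ne_zero, iota_zero, zero_div, sqrt_zero, neg_zero] at h
  exact h.mono_left nhdsWithin_le_nhds

theorem tendsto_Y22p_nhdsLT_one : Tendsto Y22p (𝓝[<] 1) atBot :=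
  tendsto_neg_atTop_atBot.comp (tendsto_sqrt_atTop.comp
    (tendsto_iota_div_sqrt_one_sub_nhdsLT_one.comp tendsto_sq_nhdsLT_one))

theorem tendsto_W22p_nhdsGT_zero : Tendsto W22p (𝓝[>] 0) (𝓝 (1 / √π)) := by
  have h := (tendsto_wSq_nhdsGT_zero.comp tendsto_sq_nhdsGT_zero).sqrt
  rw [sqrt_div zero_le_one, sqrt_one] at h
  refine h.congr' ?_
  filter_upwards [Ioo_mem_nhdsGT one_pos] with k hk using (W22p_eq_sqrt_wSq hk).symm

theorem tendsto_W22p_nhdsLT_one : Tendsto W22p (𝓝[<] 1) atTop := by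
  refine (tendsto_sqrt_atTop.comp (tendsto_wSq_nhdsLT_one.comp tendsto_sq_nhdsLT_one)).congr' ?_
  filter_upwards [Ioo_mem_nhdsLT one_pos] with k hk using (W22p_eq_sqrt_wSq hk).symm

theorem bijOn_Y22p : BijOn Y22p (Ioo 0 1) (Iio 0) :=
  bijOn_Ioo_Iio_of_strictAntiOn one_pos strictAntiOn_Y22p
    (fun _ hk => (continuousAt_Y22p (mapsTo_sq_Ioo_zero_one hk).2).continuousWithinAt)
    tendsto_Y22p_nhdsGT_zero tendsto_Y22p_nhdsLT_one

end ModulusSubstitution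

/-- `Y22p` strictly decreases on `(0,1)` from `0` to `−∞`, `W22p` strictly increases
on `(0,1)` from `1/√π` to `+∞`, and the parametric curve
`{(Y22p(k), W22p(k)) : k ∈ (0,1)}` is the graph of a function `W_conj^{22+}` strictly
decreasing from `+∞` to `1/√π` on `(−∞, 0)`. -/
theorem curve_CN_plus_graph :
    StrictAntiOn Y22p (Set.Ioo 0 1) ∧
    StrictMonoOn W22p (Set.Ioo 0 1) ∧
    Tendsto Y22p (nhdsWithin 0 (Set.Ioi 0)) (nhds 0) ∧
    Tendsto W22p (nhdsWithin 0 (Set.Ioi 0)) (nhds (1 / Real.sqrt π)) ∧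
    Tendsto Y22p (nhdsWithin 1 (Set.Iio 1)) atBot ∧
    Tendsto W22p (nhdsWithin 1 (Set.Iio 1)) atTop ∧
    ∃ Wconj : ℝ → ℝ,
      StrictAntiOn Wconj (Set.Iio 0) ∧
      Tendsto Wconj atBot atTop ∧
      Tendsto Wconj (nhdsWithin 0 (Set.Iio 0)) (nhds (1 / Real.sqrt π)) ∧
      (fun k => (Y22p k, W22p k)) '' (Set.Ioo 0 1) =
        (fun Y => (Y, Wconj Y)) '' (Set.Iio 0) := by
  have hinv : InvOn (Function.invFunOn Y22p (Ioo 0 1)) Y22p (Ioo 0 1) (Iio 0) :=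
    bijOn_Y22p.invOn_invFunOn
  have hmaps : MapsTo (Function.invFunOn Y22p (Ioo 0 1)) (Iio 0) (Ioo 0 1) :=
    bijOn_Y22p.surjOn.mapsTo_invFunOn
  refine ⟨strictAntiOn_Y22p, strictMonoOn_W22p, tendsto_Y22p_nhdsGT_zero,
    tendsto_W22p_nhdsGT_zero, tendsto_Y22p_nhdsLT_one, tendsto_W22p_nhdsLT_one,
    W22p ∘ Function.invFunOn Y22p (Ioo 0 1), ?_, ?_, ?_, ?_⟩
  · exact strictMonoOn_W22p.comp_strictAntiOn
      (strictAntiOn_of_rightInvOn strictAntiOn_Y22p hmaps hinv.2) hmaps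
  · exact tendsto_W22p_nhdsLT_one.comp (tendsto_atBot_nhdsLT_of_rightInvOn one_pos
      strictAntiOn_Y22p bijOn_Y22p.mapsTo hmaps hinv.2)
  · exact tendsto_W22p_nhdsGT_zero.comp (tendsto_nhdsLT_nhdsGT_of_rightInvOn one_pos
      strictAntiOn_Y22p bijOn_Y22p.mapsTo hmaps hinv.2)
  · exact image_prodMk_eq_of_invOn W22p bijOn_Y22p.mapsTo hmaps hinv
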